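/- arXiv:1711.00142 — 9 statements merged into one kernel-verified Lean document; each statement's English description precedes it below -/
import Mathlib

section
/- For every subset S ⊆ {1,…,N} and every j ∈ {1,…,N} \ S, the marginal gain of adding node j satisfies f(S ∪ {j}) − f(S) = (u_jᵀ Σ̄_S² u_j)/(σ² + u_jᵀ Σ̄_S u_j). -/
open Matrix BigOperators

/-- The error covariance matrix `Σ̄_S = (P⁻¹ + σ⁻² ∑_{j ∈ S} u_j u_jᵀ)⁻¹`, where `u_j` is
the `j`-th row of `U`. -/
noncomputable def errCov {N k : ℕ} (σ : ℝ) (P : Matrix (Fin k) (Fin k) ℝ)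
    (U : Matrix (Fin N) (Fin k) ℝ) (S : Finset (Fin N)) : Matrix (Fin k) (Fin k) ℝ :=
  (P⁻¹ + (σ ^ 2)⁻¹ • ∑ j ∈ S, vecMulVec (U j) (U j))⁻¹

/-- The set function `f(S) = Tr(P) − Tr(Σ̄_S)`. -/
noncomputable def fMSE {N k : ℕ} (σ : ℝ) (P : Matrix (Fin k) (Fin k) ℝ)
    (U : Matrix (Fin N) (Fin k) ℝ) (S : Finset (Fin N)) : ℝ :=
  Matrix.trace P - Matrix.trace (errCov σ P U S)

theorem aux_sm {k : ℕ} (A E : Matrix (Fin k) (Fin k) ℝ) (hAE : A * E = 1) (v : Fin k → ℝ)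
    (s : ℝ) (hs : s ≠ 0) (hd : s + v ⬝ᵥ (E *ᵥ v) ≠ 0) :
    (A + s⁻¹ • vecMulVec v v)⁻¹ =
      E - (s + v ⬝ᵥ (E *ᵥ v))⁻¹ • vecMulVec (E *ᵥ v) (v ᵥ* E) := by
  apply Matrix.inv_eq_right_inv
  have h1 : A * vecMulVec (E *ᵥ v) (v ᵥ* E) = vecMulVec v (v ᵥ* E) := by
    rw [Matrix.mul_vecMulVec, Matrix.mulVec_mulVec, hAE, Matrix.one_mulVec]
  have h2 : vecMulVec v v * E = vecMulVec v (v ᵥ* E) := by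
    rw [Matrix.vecMulVec_mul]
  have h3 : vecMulVec v v * vecMulVec (E *ᵥ v) (v ᵥ* E)
      = (v ⬝ᵥ (E *ᵥ v)) • vecMulVec v (v ᵥ* E) := by
    ext a b
    simp [Matrix.vecMulVec_mul_vecMulVec, vecMulVec_apply]
    try ring
  rw [mul_sub, add_mul, add_mul, hAE, Matrix.smul_mul, Matrix.mul_smul, Matrix.mul_smul,
    Matrix.smul_mul, h1, h2, h3]
  generalize v ⬝ᵥ (E *ᵥ v) = q at *
  ext a b
  simp only [Matrix.sub_apply, Matrix.add_apply, Matrix.smul_apply, smul_eq_mul]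
  field_simp
  ring

/-- For every subset `S ⊆ {1,…,N}` and every `j ∉ S`, the marginal gain of adding node `j`
satisfies `f(S ∪ {j}) − f(S) = (u_jᵀ Σ̄_S² u_j)/(σ² + u_jᵀ Σ̄_S u_j)`. -/
theorem marginal_gain_eq {N k : ℕ} (hN : 0 < N) (hk : 0 < k) (hkN : k ≤ N)
    (σ : ℝ) (hσ : 0 < σ)
    (P : Matrix (Fin k) (Fin k) ℝ) (hP : P.PosDef)
    (U : Matrix (Fin N) (Fin k) ℝ) (S : Finset (Fin N)) (j : Fin N) (hj : j ∉ S) :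
    fMSE σ P U (insert j S) - fMSE σ P U S =
      U j ⬝ᵥ ((errCov σ P U S * errCov σ P U S) *ᵥ U j) /
        (σ ^ 2 + U j ⬝ᵥ (errCov σ P U S *ᵥ U j)) := by
  have hA : (P⁻¹ + (σ ^ 2)⁻¹ • ∑ j ∈ S, vecMulVec (U j) (U j)).PosDef := by
    apply Matrix.PosDef.add_posSemidef hP.inv
    apply Matrix.PosSemidef.smul _ (by positivity)
    apply Matrix.posSemidef_sum
    intro i _
    simpa using Matrix.posSemidef_vecMulVec_self_star (U i)
  have hE : (errCov σ P U S).PosDef := hA.inv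
  have hq : 0 ≤ U j ⬝ᵥ (errCov σ P U S *ᵥ U j) := by
    simpa using hE.posSemidef.dotProduct_mulVec_nonneg (U j)
  have hAE : (P⁻¹ + (σ ^ 2)⁻¹ • ∑ j ∈ S, vecMulVec (U j) (U j)) * errCov σ P U S = 1 :=
    Matrix.mul_nonsing_inv _ ((Matrix.isUnit_iff_isUnit_det _).1 hA.isUnit)
  have hd : σ ^ 2 + U j ⬝ᵥ (errCov σ P U S *ᵥ U j) ≠ 0 := by positivity
  have key := aux_sm _ _ hAE (U j) (σ ^ 2) (by positivity) hd
  have h : errCov σ P U (insert j S) = errCov σ P U S -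
      (σ ^ 2 + U j ⬝ᵥ (errCov σ P U S *ᵥ U j))⁻¹ •
        vecMulVec (errCov σ P U S *ᵥ U j) (U j ᵥ* errCov σ P U S) := by
    rw [← key]
    conv_lhs => rw [errCov, Finset.sum_insert hj, smul_add, add_comm (_ • vecMulVec _ _), ← add_assoc]
  rw [fMSE, fMSE, h, Matrix.trace_sub, Matrix.trace_smul, Matrix.trace_vecMulVec,
    dotProduct_comm (errCov σ P U S *ᵥ U j) (U j ᵥ* errCov σ P U S),
    ← Matrix.dotProduct_mulVec, Matrix.mulVec_mulVec, smul_eq_mul]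
  ring
end

section
/- The set function f(S) = Tr(P) − Tr(Σ̄_S) satisfies f(∅) = 0 and is monotonically nondecreasing: for all subsets S ⊆ T ⊆ {1,…,N}, f(S) ≤ f(T); in particular f(S) ≥ 0 for every S. -/
open Matrix BigOperators

theorem trace_inv_aux {k : ℕ} (A D : Matrix (Fin k) (Fin k) ℝ) (hA : A.PosDef)
    (hD : D.PosSemidef) : Matrix.trace (A + D)⁻¹ ≤ Matrix.trace A⁻¹ := by
  have hB : (A + D).PosDef := hA.add_posSemidef hD
  have hAu : IsUnit A.det := (Matrix.isUnit_iff_isUnit_det _).1 hA.isUnit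
  have hBu : IsUnit (A + D).det := (Matrix.isUnit_iff_isUnit_det _).1 hB.isUnit
  have hBi : ((A + D)⁻¹)ᴴ = (A + D)⁻¹ := hB.inv.isHermitian
  have hDh : Dᴴ = D := hD.isHermitian
  have hDe : D = (A + D) - A := by abel
  have e1 : A⁻¹ - (A + D)⁻¹ = (A + D)⁻¹ * D * A⁻¹ := by
    conv_rhs => rw [show (A + D)⁻¹ * D = (A + D)⁻¹ * ((A + D) - A) by rw [← hDe]]
    rw [mul_sub, Matrix.nonsing_inv_mul _ hBu, sub_mul, one_mul, mul_assoc,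
      Matrix.mul_nonsing_inv _ hAu, mul_one]
  have e2 : A⁻¹ - (A + D)⁻¹ = A⁻¹ * D * (A + D)⁻¹ := by
    conv_rhs => rw [show A⁻¹ * D = A⁻¹ * ((A + D) - A) by rw [← hDe]]
    rw [mul_sub, Matrix.nonsing_inv_mul _ hAu, sub_mul, one_mul, mul_assoc,
      Matrix.mul_nonsing_inv _ hBu, mul_one]
  have e3 : A⁻¹ - (A + D)⁻¹ = (A + D)⁻¹ * D * ((A + D)⁻¹)ᴴ
      + ((A + D)⁻¹ * D) * A⁻¹ * ((A + D)⁻¹ * D)ᴴ := by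
    rw [Matrix.conjTranspose_mul, hBi, hDh]
    have e4 : A⁻¹ = (A + D)⁻¹ + A⁻¹ * D * (A + D)⁻¹ := by rw [← e2]; abel
    rw [e1]
    conv_lhs => rw [e4]
    simp only [mul_add, mul_assoc]
  have h : (A⁻¹ - (A + D)⁻¹).PosSemidef := by
    rw [e3]
    exact (hD.mul_mul_conjTranspose_same _).add
      (hA.inv.posSemidef.mul_mul_conjTranspose_same _)
  have := h.trace_nonneg
  rw [Matrix.trace_sub] at this
  linarith

theorem gram_psd_aux {N k : ℕ} (σ : ℝ) (U : Matrix (Fin N) (Fin k) ℝ) (S : Finset (Fin N)) :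
    ((σ ^ 2)⁻¹ • ∑ j ∈ S, vecMulVec (U j) (U j)).PosSemidef := by
  refine Matrix.PosSemidef.smul ?_ (by positivity)
  refine Matrix.posSemidef_sum _ fun j _ => ?_
  simpa using Matrix.posSemidef_vecMulVec_self_star (U j)

/-- The set function `f(S) = Tr(P) − Tr(Σ̄_S)` satisfies `f(∅) = 0` and is monotonically
nondecreasing: for all subsets `S ⊆ T ⊆ {1,…,N}`, `f(S) ≤ f(T)`; in particular `f(S) ≥ 0`
for every `S`. -/
theorem fMSE_monotone {N k : ℕ} (hN : 0 < N) (hk : 0 < k) (hkN : k ≤ N)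
    (σ : ℝ) (hσ : 0 < σ)
    (P : Matrix (Fin k) (Fin k) ℝ) (hP : P.PosDef)
    (U : Matrix (Fin N) (Fin k) ℝ) :
    fMSE σ P U ∅ = 0 ∧
    (∀ S T : Finset (Fin N), S ⊆ T → fMSE σ P U S ≤ fMSE σ P U T) ∧
    (∀ S : Finset (Fin N), 0 ≤ fMSE σ P U S) := by
  have h0 : fMSE σ P U ∅ = 0 := by
    have hPu : IsUnit P.det := (Matrix.isUnit_iff_isUnit_det _).1 hP.isUnit
    simp [fMSE, errCov, Matrix.nonsing_inv_nonsing_inv _ hPu]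
  have hm : ∀ S T : Finset (Fin N), S ⊆ T → fMSE σ P U S ≤ fMSE σ P U T := by
    intro S T hST
    have h := trace_inv_aux (P⁻¹ + (σ ^ 2)⁻¹ • ∑ j ∈ S, vecMulVec (U j) (U j))
      ((σ ^ 2)⁻¹ • ∑ j ∈ T \ S, vecMulVec (U j) (U j))
      (hP.inv.add_posSemidef (gram_psd_aux σ U S)) (gram_psd_aux σ U (T \ S))
    rw [add_assoc, ← smul_add, add_comm (∑ j ∈ S, _), Finset.sum_sdiff hST] at h
    unfold fMSE errCov
    linarith
  exact ⟨h0, hm, fun S => h0 ▸ hm ∅ S (Finset.empty_subset S)⟩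
end

section
/- Assume UᵀU = I_k. Then the maximum element-wise curvature of f is bounded as follows: for all subsets S ⊆ T ⊆ {1,…,N} and every j ∈ {1,…,N} \ T, f(T ∪ {j}) − f(T) ≤ κ · (f(S ∪ {j}) − f(S)), where κ = (λ_max(P)²/λ_min(P)²) · (1 + λ_max(P)/σ²)³. -/
open Matrix BigOperators

theorem quad_aux {k : ℕ} {P : Matrix (Fin k) (Fin k) ℝ} (hP : P.IsHermitian) (x : Fin k → ℝ) :
    ∃ y : Fin k → ℝ, y ⬝ᵥ y = x ⬝ᵥ x ∧ x ⬝ᵥ (P *ᵥ x) = ∑ i, hP.eigenvalues i * (y i * y i) := by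
  have h := hP.spectral_theorem
  rw [Unitary.conjStarAlgAut_apply] at h
  set V : Matrix (Fin k) (Fin k) ℝ := (hP.eigenvectorUnitary : Matrix (Fin k) (Fin k) ℝ) with hV
  have hs : star V = Vᵀ := by
    rw [star_eq_conjTranspose, conjTranspose_eq_transpose_of_trivial]
  have hVV : V * Vᵀ = 1 := by
    rw [← hs]; exact Unitary.coe_mul_star_self _
  rw [hs] at h
  refine ⟨Vᵀ *ᵥ x, ?_, ?_⟩
  · rw [dotProduct_mulVec, vecMul_mulVec, ← mulVec_transpose]
    simp [hVV]
  · conv_lhs => rw [h]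
    rw [← mulVec_mulVec, ← mulVec_mulVec, dotProduct_mulVec, ← mulVec_transpose]
    simp only [dotProduct, mulVec_diagonal]
    refine Finset.sum_congr rfl fun i _ => ?_
    simp
    ring

theorem quad_le {k : ℕ} {P : Matrix (Fin k) (Fin k) ℝ} (hP : P.IsHermitian) (x : Fin k → ℝ) :
    x ⬝ᵥ (P *ᵥ x) ≤ (⨆ i, hP.eigenvalues i) * (x ⬝ᵥ x) := by
  obtain ⟨y, h1, h2⟩ := quad_aux hP x
  rw [h2, ← h1, dotProduct, Finset.mul_sum]
  refine Finset.sum_le_sum fun i _ => ?_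
  exact mul_le_mul_of_nonneg_right (le_ciSup (Set.finite_range _).bddAbove i) (mul_self_nonneg _)

theorem le_quad {k : ℕ} {P : Matrix (Fin k) (Fin k) ℝ} (hP : P.IsHermitian) (x : Fin k → ℝ) :
    (⨅ i, hP.eigenvalues i) * (x ⬝ᵥ x) ≤ x ⬝ᵥ (P *ᵥ x) := by
  obtain ⟨y, h1, h2⟩ := quad_aux hP x
  rw [h2, ← h1, dotProduct, Finset.mul_sum]
  refine Finset.sum_le_sum fun i _ => ?_
  exact mul_le_mul_of_nonneg_right (ciInf_le (Set.finite_range _).bddBelow i) (mul_self_nonneg _)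

theorem dp_nonneg {k : ℕ} (x : Fin k → ℝ) : 0 ≤ x ⬝ᵥ x :=
  Finset.sum_nonneg fun i _ => mul_self_nonneg _

theorem dp_expand {k : ℕ} (x y : Fin k → ℝ) (a : ℝ) :
    0 ≤ x ⬝ᵥ x - 2 * a * (x ⬝ᵥ y) + a ^ 2 * (y ⬝ᵥ y) := by
  have h := dp_nonneg (x - a • y)
  simp only [sub_dotProduct, dotProduct_sub, smul_dotProduct, dotProduct_smul, smul_eq_mul,
    dotProduct_comm y x] at h
  linarith

theorem gain_aux {k : ℕ} {A : Matrix (Fin k) (Fin k) ℝ} (hA : A.PosDef) {c : ℝ} (hc : 0 < c)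
    (u x : Fin k → ℝ) (hx : A *ᵥ x = u) (hxu : 0 ≤ x ⬝ᵥ u) :
    trace A⁻¹ - trace (A + c • vecMulVec u u)⁻¹ = c * (x ⬝ᵥ x) / (1 + c * (x ⬝ᵥ u)) := by
  have hd : 0 < 1 + c * (x ⬝ᵥ u) := by positivity
  have hu : IsUnit A.det := isUnit_iff_ne_zero.mpr hA.det_pos.ne'
  have hx' : A⁻¹ *ᵥ u = x := by
    rw [← hx, mulVec_mulVec, nonsing_inv_mul _ hu, one_mulVec]
  have hsymm : (A⁻¹)ᵀ = A⁻¹ := by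
    have := hA.1.inv.eq
    rwa [conjTranspose_eq_transpose_of_trivial] at this
  have hvx : u ᵥ* A⁻¹ = x := by
    rw [← mulVec_transpose, hsymm, hx']
  have key : (A + c • vecMulVec u u)⁻¹ =
      A⁻¹ - (c / (1 + c * (x ⬝ᵥ u))) • vecMulVec x x := by
    apply inv_eq_right_inv
    rw [mul_sub, add_mul, add_mul, mul_nonsing_inv _ hu, smul_mul_assoc, mul_smul_comm,
      mul_smul_comm, smul_mul_assoc, vecMulVec_mul, hvx, mul_vecMulVec, hx,
      vecMulVec_mul_vecMulVec, dotProduct_comm u x]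
    ext a b
    simp [vecMulVec_apply]
    field_simp
    ring
  rw [key, trace_sub, trace_smul, trace_vecMulVec, smul_eq_mul]
  ring

theorem bounds_aux {N k : ℕ} (hk : 0 < k) {P : Matrix (Fin k) (Fin k) ℝ} (hP : P.PosDef)
    (U : Matrix (Fin N) (Fin k) ℝ) (hU : Uᵀ * U = (1 : Matrix (Fin k) (Fin k) ℝ))
    {c : ℝ} (hc : 0 < c) (S : Finset (Fin N)) (u : Fin k → ℝ) {l L : ℝ} (hl : 0 < l) (hL : 0 < L)
    (hlow : ∀ x, l * (x ⬝ᵥ x) ≤ x ⬝ᵥ (P *ᵥ x)) (hup : ∀ x, x ⬝ᵥ (P *ᵥ x) ≤ L * (x ⬝ᵥ x)) :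
    ∃ x, 0 ≤ x ⬝ᵥ u ∧ x ⬝ᵥ u ≤ L * (u ⬝ᵥ u) ∧ x ⬝ᵥ x ≤ L ^ 2 * (u ⬝ᵥ u) ∧
      u ⬝ᵥ u ≤ (1 / l + c) ^ 2 * (x ⬝ᵥ x) ∧
      trace (P⁻¹ + c • ∑ j ∈ S, vecMulVec (U j) (U j))⁻¹ -
      trace (P⁻¹ + c • ∑ j ∈ S, vecMulVec (U j) (U j) + c • vecMulVec u u)⁻¹ =
        c * (x ⬝ᵥ x) / (1 + c * (x ⬝ᵥ u)) := by
  set G := ∑ j ∈ S, vecMulVec (U j) (U j) with hG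
  have hGps : G.PosSemidef := by
    refine posSemidef_sum _ fun i _ => ?_
    simpa using posSemidef_vecMulVec_self_star (U i)
  have hA : (P⁻¹ + c • G).PosDef := hP.inv.add_posSemidef (hGps.smul hc.le)
  have hu : IsUnit (P⁻¹ + c • G).det := isUnit_iff_ne_zero.mpr hA.det_pos.ne'
  have hPu : IsUnit P.det := isUnit_iff_ne_zero.mpr hP.det_pos.ne'
  set x := (P⁻¹ + c • G)⁻¹ *ᵥ u with hxdef
  have hx : (P⁻¹ + c • G) *ᵥ x = u := by
    rw [hxdef, mulVec_mulVec, mul_nonsing_inv _ hu, one_mulVec]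
  set z := P⁻¹ *ᵥ x with hz
  set g := G *ᵥ x with hg
  have hPz : P *ᵥ z = x := by
    rw [hz, mulVec_mulVec, mul_nonsing_inv _ hPu, one_mulVec]
  have huz : u = z + c • g := by
    rw [← hx, add_mulVec, smul_mulVec]
  have hxg : 0 ≤ x ⬝ᵥ g := by simpa using hGps.dotProduct_mulVec_nonneg x
  -- P inverse lower bound
  have h1 : x ⬝ᵥ x ≤ L * (x ⬝ᵥ z) := by
    have h := hP.posSemidef.dotProduct_mulVec_nonneg (L • z - x)
    have h2 := hup x
    have hsym : z ⬝ᵥ (P *ᵥ x) = x ⬝ᵥ x := by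
      have hPT : Pᵀ = P := by
        have := hP.1.eq
        rwa [conjTranspose_eq_transpose_of_trivial] at this
      rw [dotProduct_mulVec, ← mulVec_transpose, hPT, hPz]
    simp only [star_trivial, mulVec_sub, mulVec_smul, hPz, sub_dotProduct, dotProduct_sub,
      smul_dotProduct, dotProduct_smul, smul_eq_mul, hsym, dotProduct_comm z x] at h
    have : 0 ≤ L * (L * (x ⬝ᵥ z) - x ⬝ᵥ x) := by nlinarith
    have := nonneg_of_mul_nonneg_right this hL
    linarith
  have hxu : x ⬝ᵥ u = x ⬝ᵥ z + c * (x ⬝ᵥ g) := by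
    rw [huz, dotProduct_add, dotProduct_smul, smul_eq_mul]
  have h2 : x ⬝ᵥ x ≤ L * (x ⬝ᵥ u) := by
    rw [hxu]
    have : 0 ≤ L * (c * (x ⬝ᵥ g)) := by positivity
    linarith
  have hxx := dp_nonneg x
  have h3 := dp_expand x u L
  have hxu0 : 0 ≤ x ⬝ᵥ u := nonneg_of_mul_nonneg_right (hxx.trans h2) hL
  -- frame identity
  have hfr : ∀ y : Fin k → ℝ, ∑ i ∈ S, (U i ⬝ᵥ y) ^ 2 ≤ y ⬝ᵥ y := by
    intro y
    have : y ⬝ᵥ y = ∑ i, (U i ⬝ᵥ y) ^ 2 := by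
      calc y ⬝ᵥ y = y ⬝ᵥ ((Uᵀ * U) *ᵥ y) := by rw [hU, one_mulVec]
        _ = (U *ᵥ y) ⬝ᵥ (U *ᵥ y) := by
          rw [← mulVec_mulVec, dotProduct_mulVec, ← mulVec_transpose, transpose_transpose]
        _ = _ := by
          simp only [dotProduct, mulVec, sq]
    rw [this]
    exact Finset.sum_le_sum_of_subset_of_nonneg (Finset.subset_univ _) fun _ _ _ => sq_nonneg _
  have hgg : g ⬝ᵥ g ≤ x ⬝ᵥ x := by
    have e : g ⬝ᵥ g = ∑ i ∈ S, (U i ⬝ᵥ g) * (U i ⬝ᵥ x) := by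
      have e0 : g = ∑ i ∈ S, vecMulVec (U i) (U i) *ᵥ x := by rw [hg, hG, sum_mulVec]
      nth_rewrite 1 [e0]
      rw [sum_dotProduct]
      refine Finset.sum_congr rfl fun i _ => ?_
      rw [vecMulVec_mulVec]
      simp [mul_comm]
    have e2 : 2 * (g ⬝ᵥ g) ≤ ∑ i ∈ S, (U i ⬝ᵥ g) ^ 2 + ∑ i ∈ S, (U i ⬝ᵥ x) ^ 2 := by
      rw [e, Finset.mul_sum, ← Finset.sum_add_distrib]
      refine Finset.sum_le_sum fun i _ => ?_
      nlinarith [sq_nonneg (U i ⬝ᵥ g - U i ⬝ᵥ x)]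
    linarith [hfr g, hfr x]
  have hzz : l ^ 2 * (z ⬝ᵥ z) ≤ x ⬝ᵥ x := by
    have a1 := dp_expand x z l
    have a2 := hlow z
    rw [hPz, dotProduct_comm z x] at a2
    nlinarith
  have hzg := dp_expand g z l
  have huu : u ⬝ᵥ u = z ⬝ᵥ z + 2 * c * (g ⬝ᵥ z) + c ^ 2 * (g ⬝ᵥ g) := by
    rw [huz]
    simp only [add_dotProduct, dotProduct_add, smul_dotProduct, dotProduct_smul, smul_eq_mul,
      dotProduct_comm z g]
    ring
  refine ⟨x, hxu0, ?_, ?_, ?_, gain_aux hA hc u x hx hxu0⟩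
  · have : 0 ≤ L * (L * (u ⬝ᵥ u) - x ⬝ᵥ u) := by nlinarith
    have := nonneg_of_mul_nonneg_right this hL
    linarith
  · nlinarith
  · have b1 : z ⬝ᵥ z ≤ (x ⬝ᵥ x) / l ^ 2 := by
      rw [le_div_iff₀ (by positivity)]; linarith
    have b2 : g ⬝ᵥ z ≤ (x ⬝ᵥ x) / l := by
      rw [le_div_iff₀ hl]; linarith
    have b3 : 2 * c * (g ⬝ᵥ z) ≤ 2 * c * ((x ⬝ᵥ x) / l) := by gcongr
    have b4 : c ^ 2 * (g ⬝ᵥ g) ≤ c ^ 2 * (x ⬝ᵥ x) := by gcongr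
    rw [huu]
    calc _ ≤ (x ⬝ᵥ x) / l ^ 2 + 2 * c * ((x ⬝ᵥ x) / l) + c ^ 2 * (x ⬝ᵥ x) := by linarith
      _ = _ := by field_simp; ring

/-- Assume `UᵀU = I_k`. Then the maximum element-wise curvature of `f` is bounded: for all
subsets `S ⊆ T ⊆ {1,…,N}` and every `j ∉ T`,
`f(T ∪ {j}) − f(T) ≤ κ · (f(S ∪ {j}) − f(S))`, where
`κ = (λ_max(P)²/λ_min(P)²)·(1 + λ_max(P)/σ²)³`. -/
theorem curvature_bound {N k : ℕ} (hN : 0 < N) (hk : 0 < k) (hkN : k ≤ N)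
    (σ : ℝ) (hσ : 0 < σ)
    (P : Matrix (Fin k) (Fin k) ℝ) (hP : P.PosDef)
    (U : Matrix (Fin N) (Fin k) ℝ)
    (hU : Uᵀ * U = (1 : Matrix (Fin k) (Fin k) ℝ))
    (S T : Finset (Fin N)) (hST : S ⊆ T) (j : Fin N) (hj : j ∉ T) :
    fMSE σ P U (insert j T) - fMSE σ P U T ≤
      (⨆ i, hP.1.eigenvalues i) ^ 2 / (⨅ i, hP.1.eigenvalues i) ^ 2 *
        (1 + (⨆ i, hP.1.eigenvalues i) / σ ^ 2) ^ 3 *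
        (fMSE σ P U (insert j S) - fMSE σ P U S) := by
  have : Nonempty (Fin k) := ⟨⟨0, hk⟩⟩
  set L := ⨆ i, hP.1.eigenvalues i with hLd
  set l := ⨅ i, hP.1.eigenvalues i with hld
  have hl : 0 < l := by
    obtain ⟨i, hi⟩ := exists_eq_ciInf_of_finite (f := hP.1.eigenvalues)
    rw [hld, ← hi]
    exact hP.eigenvalues_pos i
  have hlL : l ≤ L := ciInf_le_ciSup (Set.finite_range _).bddBelow (Set.finite_range _).bddAbove
  have hL : 0 < L := hl.trans_le hlL
  obtain ⟨c, hc, hcσ⟩ : ∃ c : ℝ, 0 < c ∧ (σ ^ 2)⁻¹ = c := ⟨_, by positivity, rfl⟩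
  set u := U j with hu
  obtain ⟨x, x1, x2, x3, x4, x5⟩ :=
    bounds_aux hk hP U hU hc T u hl hL (le_quad hP.1) (quad_le hP.1)
  obtain ⟨y, y1, y2, y3, y4, y5⟩ :=
    bounds_aux hk hP U hU hc S u hl hL (le_quad hP.1) (quad_le hP.1)
  have hjS : j ∉ S := fun h => hj (hST h)
  have eT : fMSE σ P U (insert j T) - fMSE σ P U T = c * (x ⬝ᵥ x) / (1 + c * (x ⬝ᵥ u)) := by
    rw [← x5, fMSE, fMSE, errCov, errCov, Finset.sum_insert hj, hcσ, smul_add,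
      add_comm (c • vecMulVec _ _), add_assoc]
    ring
  have eS : fMSE σ P U (insert j S) - fMSE σ P U S = c * (y ⬝ᵥ y) / (1 + c * (y ⬝ᵥ u)) := by
    rw [← y5, fMSE, fMSE, errCov, errCov, Finset.sum_insert hjS, hcσ, smul_add,
      add_comm (c • vecMulVec _ _), add_assoc]
    ring
  rw [eT, eS, div_eq_mul_inv L (σ ^ 2), hcσ]
  have huu0 := dp_nonneg u
  have hu1 : u ⬝ᵥ u ≤ 1 := by
    have h : u ⬝ᵥ u = ∑ i, (U i ⬝ᵥ u) ^ 2 := by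
      calc u ⬝ᵥ u = u ⬝ᵥ ((Uᵀ * U) *ᵥ u) := by rw [hU, one_mulVec]
        _ = (U *ᵥ u) ⬝ᵥ (U *ᵥ u) := by
          rw [← mulVec_mulVec, dotProduct_mulVec, ← mulVec_transpose, transpose_transpose]
        _ = _ := by
          simp only [dotProduct, mulVec, sq]
    have h2 : (u ⬝ᵥ u) ^ 2 ≤ u ⬝ᵥ u := by
      conv_rhs => rw [h]
      exact Finset.single_le_sum (f := fun i => (U i ⬝ᵥ u) ^ 2)
        (fun i _ => sq_nonneg _) (Finset.mem_univ j)
    by_contra! h3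
    nlinarith
  have hyy := dp_nonneg y
  have hxx := dp_nonneg x
  have yu : y ⬝ᵥ u ≤ L := y2.trans (by nlinarith)
  have s1 : c * (x ⬝ᵥ x) / (1 + c * (x ⬝ᵥ u)) ≤ c * (x ⬝ᵥ x) :=
    div_le_self (by positivity) (by have : 0 ≤ c * (x ⬝ᵥ u) := by positivity
                                    linarith)
  have s2 : x ⬝ᵥ x ≤ L ^ 2 * ((1 / l + c) ^ 2 * (y ⬝ᵥ y)) := x3.trans (by gcongr)
  have s3 : c * (y ⬝ᵥ y) / (1 + L * c) ≤ c * (y ⬝ᵥ y) / (1 + c * (y ⬝ᵥ u)) := by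
    rw [mul_comm L c]
    gcongr
  calc _ ≤ c * (x ⬝ᵥ x) := s1
    _ ≤ c * (L ^ 2 * ((1 / l + c) ^ 2 * (y ⬝ᵥ y))) := by gcongr
    _ = L ^ 2 / l ^ 2 * (1 + l * c) ^ 2 * (c * (y ⬝ᵥ y)) := by field_simp
    _ ≤ L ^ 2 / l ^ 2 * (1 + L * c) ^ 2 * (c * (y ⬝ᵥ y)) := by gcongr
    _ = L ^ 2 / l ^ 2 * (1 + L * c) ^ 3 * (c * (y ⬝ᵥ y) / (1 + L * c)) := by field_simp
    _ ≤ _ := by gcongr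
end

section
/- For every subset S ⊆ {1,…,N} and every j ∈ {1,…,N} \ S with u_j ≠ 0, the marginal gain is strictly positive: f(S ∪ {j}) − f(S) > 0. -/
open Matrix BigOperators

theorem aux_trace {k : ℕ} (A : Matrix (Fin k) (Fin k) ℝ) (hA : A.PosDef) (c : ℝ) (hc : 0 < c)
    (u : Fin k → ℝ) (hu : u ≠ 0) :
    (A + c • vecMulVec u u)⁻¹.trace < A⁻¹.trace := by
  have hV : (vecMulVec u u).PosSemidef := by
    simpa using posSemidef_vecMulVec_self_star u
  have hB : (A + c • vecMulVec u u).PosDef := hA.add_posSemidef (hV.smul hc.le)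
  obtain ⟨B, hBdef⟩ : ∃ B, B = A + c • vecMulVec u u := ⟨_, rfl⟩
  rw [← hBdef] at hB ⊢
  have hAu : IsUnit A.det := (Matrix.isUnit_iff_isUnit_det _).1 hA.isUnit
  have hBu : IsUnit B.det := (Matrix.isUnit_iff_isUnit_det _).1 hB.isUnit
  have hBi : (B⁻¹)ᵀ = B⁻¹ := by
    have := hB.inv.isHermitian
    simpa [IsHermitian, conjTranspose_eq_transpose_of_trivial] using this
  set v := A⁻¹ *ᵥ u with hv
  set w := B⁻¹ *ᵥ u with hw
  have hAv : A *ᵥ v = u := by rw [hv, mulVec_mulVec, mul_nonsing_inv _ hAu, one_mulVec]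
  have hBw : B *ᵥ w = u := by rw [hw, mulVec_mulVec, mul_nonsing_inv _ hBu, one_mulVec]
  have hw0 : w ≠ 0 := by
    intro h
    rw [h, mulVec_zero] at hBw
    exact hu hBw.symm
  have hs : 0 < u ⬝ᵥ v := by
    have := hA.inv.dotProduct_mulVec_pos hu
    simpa using this
  have hBv : B *ᵥ v = (1 + c * (u ⬝ᵥ v)) • u := by
    rw [hBdef, add_mulVec, hAv, smul_mulVec, vecMulVec_mulVec]
    ext i
    simp
    ring
  have hvw : v = (1 + c * (u ⬝ᵥ v)) • w := by
    rw [hw, ← mulVec_smul, ← hBv, mulVec_mulVec, nonsing_inv_mul _ hBu, one_mulVec]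
  have key : A⁻¹ - B⁻¹ = c • vecMulVec v w := by
    have h1 : A⁻¹ - B⁻¹ = A⁻¹ * (B - A) * B⁻¹ := by
      rw [mul_sub, sub_mul, nonsing_inv_mul _ hAu, one_mul, mul_assoc, mul_nonsing_inv _ hBu,
        mul_one]
    rw [h1, hBdef, add_sub_cancel_left, ← hBdef, mul_smul_comm, smul_mul_assoc, mul_vecMulVec,
      vecMulVec_mul, ← mulVec_transpose, hBi]
  have hww : 0 < w ⬝ᵥ w := by
    have := dotProduct_star_self_pos_iff.2 hw0
    simpa using this
  have ht : A⁻¹.trace - B⁻¹.trace = c * ((1 + c * (u ⬝ᵥ v)) * (w ⬝ᵥ w)) := by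
    rw [← trace_sub, key, trace_smul, trace_vecMulVec, smul_eq_mul]
    congr 1
    conv_lhs => rw [hvw]
    rw [smul_dotProduct, smul_eq_mul]
  have : 0 < c * ((1 + c * (u ⬝ᵥ v)) * (w ⬝ᵥ w)) := by positivity
  linarith

/-- For every subset `S ⊆ {1,…,N}` and every `j ∉ S` with `u_j ≠ 0`, the marginal gain is
strictly positive: `f(S ∪ {j}) − f(S) > 0`. -/
theorem marginal_gain_pos {N k : ℕ} (hN : 0 < N) (hk : 0 < k) (hkN : k ≤ N)
    (σ : ℝ) (hσ : 0 < σ)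
    (P : Matrix (Fin k) (Fin k) ℝ) (hP : P.PosDef)
    (U : Matrix (Fin N) (Fin k) ℝ) (S : Finset (Fin N)) (j : Fin N) (hj : j ∉ S)
    (hu : U j ≠ 0) :
    0 < fMSE σ P U (insert j S) - fMSE σ P U S := by
  have hV : (∑ j ∈ S, vecMulVec (U j) (U j)).PosSemidef :=
    posSemidef_sum _ fun i _ => by simpa using posSemidef_vecMulVec_self_star (U i)
  have hc : 0 < (σ ^ 2)⁻¹ := by positivity
  have h := aux_trace _ (hP.inv.add_posSemidef (hV.smul hc.le)) _ hc (U j) hu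
  unfold fMSE errCov
  rw [Finset.sum_insert hj, smul_add, add_comm ((σ ^ 2)⁻¹ • vecMulVec (U j) (U j)), ← add_assoc]
  linarith
end

section
/- For every pair of subsets S, O ⊆ X, f(S ∪ O) − f(S) ≤ c · ∑_{j ∈ O \ S} (f(S ∪ {j}) − f(S)). -/
open Finset BigOperators

/-- Let `X` be a finite set and `f` a monotone nondecreasing set function with `f(∅) = 0`
whose maximum element-wise curvature is at most `c` (with `c ≥ 1`). Then for every pair of
subsets `S, O ⊆ X`, `f(S ∪ O) − f(S) ≤ c · ∑_{j ∈ O \ S} (f(S ∪ {j}) − f(S))`. -/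
theorem weak_submodular_union_bound {X : Type*} [Fintype X] [DecidableEq X]
    (f : Finset X → ℝ)
    (hmono : ∀ S T : Finset X, S ⊆ T → f S ≤ f T)
    (hempty : f ∅ = 0)
    (c : ℝ) (hc : 1 ≤ c)
    (hcurv : ∀ S T : Finset X, ∀ j : X, S ⊆ T → j ∉ T →
      f (insert j T) - f T ≤ c * (f (insert j S) - f S))
    (S O : Finset X) :
    f (S ∪ O) - f S ≤ c * ∑ j ∈ O \ S, (f (insert j S) - f S) := by
  have key : ∀ A : Finset X, Disjoint A S →
      f (S ∪ A) - f S ≤ c * ∑ j ∈ A, (f (insert j S) - f S) := by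
    intro A
    induction A using Finset.induction_on with
    | empty => intro _; simp
    | insert a A ha ih =>
      intro hd
      rw [Finset.disjoint_insert_left] at hd
      have h1 := ih hd.2
      have h2 := hcurv S (S ∪ A) a Finset.subset_union_left
        (by simp [ha, hd.1])
      rw [Finset.sum_insert ha, Finset.union_insert, mul_add]
      linarith
  have h := key (O \ S) Finset.sdiff_disjoint
  rwa [Finset.union_sdiff_self_eq_union] at h
end

section
/- Let k ≥ 1 and let O ⊆ X with |O| ≤ k. Then for every subset S ⊆ X with O \ S nonempty, f(O) − f(S) ≤ c · k · max_{j ∈ O \ S} (f(S ∪ {j}) − f(S)). -/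
open Finset BigOperators

/-- Let `X` be a finite set and `f` a monotone nondecreasing set function with `f(∅) = 0`
whose maximum element-wise curvature is at most `c` (with `c ≥ 1`). Let `k ≥ 1` and let
`O ⊆ X` with `|O| ≤ k`. Then for every subset `S ⊆ X` with `O \ S` nonempty,
`f(O) − f(S) ≤ c·k·max_{j ∈ O \ S} (f(S ∪ {j}) − f(S))`. -/
theorem weak_submodular_max_bound {X : Type*} [Fintype X] [DecidableEq X]
    (f : Finset X → ℝ)
    (hmono : ∀ S T : Finset X, S ⊆ T → f S ≤ f T)
    (hempty : f ∅ = 0)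
    (c : ℝ) (hc : 1 ≤ c)
    (hcurv : ∀ S T : Finset X, ∀ j : X, S ⊆ T → j ∉ T →
      f (insert j T) - f T ≤ c * (f (insert j S) - f S))
    (k : ℕ) (hk : 1 ≤ k) (O : Finset X) (hO : O.card ≤ k)
    (S : Finset X) (hOS : (O \ S).Nonempty) :
    f O - f S ≤ c * k * (O \ S).sup' hOS (fun j => f (insert j S) - f S) := by
  set M := (O \ S).sup' hOS (fun j => f (insert j S) - f S) with hM
  have hle : ∀ j ∈ O \ S, f (insert j S) - f S ≤ M := fun j hj =>
    Finset.le_sup' (fun j => f (insert j S) - f S) hj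
  have hM0 : 0 ≤ M := by
    obtain ⟨j, hj⟩ := hOS
    have h1 := hle j hj
    have h2 := hmono S (insert j S) (Finset.subset_insert j S)
    linarith
  have key : ∀ A : Finset X, A ⊆ O \ S → f (S ∪ A) - f S ≤ c * A.card * M := by
    intro A
    induction A using Finset.induction_on with
    | empty => intro _; simp
    | insert a A ha ih =>
      intro hA
      have hA' := ih ((Finset.subset_insert a A).trans hA)
      have haO : a ∈ O \ S := hA (Finset.mem_insert_self a A)
      have haS : a ∉ S ∪ A := by
        simp only [Finset.mem_sdiff] at haO
        simp [haO.2, ha]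
      have h1 := hcurv S (S ∪ A) a Finset.subset_union_left haS
      have h2 := mul_le_mul_of_nonneg_left (hle a haO) (by linarith : (0:ℝ) ≤ c)
      rw [Finset.union_insert, Finset.card_insert_of_notMem ha]
      push_cast
      nlinarith
  have h1 := key (O \ S) (Finset.Subset.refl _)
  have h2 : f O ≤ f (S ∪ (O \ S)) := hmono _ _ (by
    rw [Finset.union_sdiff_self_eq_union]; exact Finset.subset_union_right)
  have h3 : ((O \ S).card : ℝ) ≤ k := by
    exact_mod_cast (Finset.card_le_card Finset.sdiff_subset).trans hO
  have h4 : c * ((O \ S).card : ℝ) * M ≤ c * k * M :=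
    mul_le_mul_of_nonneg_right (mul_le_mul_of_nonneg_left h3 (by linarith)) hM0
  linarith
end

section
/- Let k ≥ 1 with k ≤ |X| and let S_0 = ∅, S_{i+1} = S_i ∪ {j_i} for i = 0, …, k−1, where at each step j_i ∈ X \ S_i maximizes the marginal gain f(S_i ∪ {j}) − f(S_i) over j ∈ X \ S_i (the greedy algorithm). Then for every subset O ⊆ X with |O| ≤ k, f(S_k) ≥ (1 − (1 − 1/(c·k))^k) · f(O); in particular f(S_k) ≥ (1 − e^{−1/c}) · f(O). -/
open Finset BigOperators

theorem greedy_aux {X : Type*} [DecidableEq X]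
    (f : Finset X → ℝ) (c : ℝ) (hc : 1 ≤ c)
    (hcurv : ∀ S T : Finset X, ∀ j : X, S ⊆ T → j ∉ T →
      f (insert j T) - f T ≤ c * (f (insert j S) - f S))
    (A : Finset X) (g : ℝ) (hg : 0 ≤ g)
    (h : ∀ j, j ∉ A → f (insert j A) - f A ≤ g) (P : Finset X) :
    f (A ∪ P) - f A ≤ P.card * (c * g) := by
  induction P using Finset.induction_on with
  | empty => simp
  | insert a P ha ih =>
    rw [Finset.card_insert_of_notMem ha, Finset.union_insert]
    push_cast
    have hcg : 0 ≤ c * g := by positivity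
    by_cases hm : a ∈ A ∪ P
    · rw [Finset.insert_eq_of_mem hm]
      linarith
    · have h1 := hcurv A (A ∪ P) a Finset.subset_union_left hm
      have h2 := h a (fun h' => hm (Finset.mem_union_left _ h'))
      have h3 : c * (f (insert a A) - f A) ≤ c * g :=
        mul_le_mul_of_nonneg_left h2 (by linarith)
      linarith

/-- Let `X` be a finite set and `f` a monotone nondecreasing set function with `f(∅) = 0`
whose maximum element-wise curvature is at most `c` (with `c ≥ 1`). Let `k ≥ 1` with
`k ≤ |X|` and let `S_0 = ∅`, `S_{i+1} = S_i ∪ {j_i}`, where at each step `j_i ∈ X \ S_i`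
maximizes the marginal gain over `j ∈ X \ S_i` (the greedy algorithm). Then for every
subset `O ⊆ X` with `|O| ≤ k`, `f(S_k) ≥ (1 − (1 − 1/(c·k))^k)·f(O)`; in particular
`f(S_k) ≥ (1 − e^{−1/c})·f(O)`. -/
theorem greedy_guarantee {X : Type*} [Fintype X] [DecidableEq X]
    (f : Finset X → ℝ)
    (hmono : ∀ S T : Finset X, S ⊆ T → f S ≤ f T)
    (hempty : f ∅ = 0)
    (c : ℝ) (hc : 1 ≤ c)
    (hcurv : ∀ S T : Finset X, ∀ j : X, S ⊆ T → j ∉ T →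
      f (insert j T) - f T ≤ c * (f (insert j S) - f S))
    (k : ℕ) (hk : 1 ≤ k) (hkX : k ≤ Fintype.card X)
    (S : ℕ → Finset X) (jsel : ℕ → X)
    (hS0 : S 0 = ∅)
    (hstep : ∀ i < k, S (i + 1) = insert (jsel i) (S i))
    (hnotmem : ∀ i < k, jsel i ∉ S i)
    (hgreedy : ∀ i < k, ∀ j, j ∉ S i →
      f (insert j (S i)) - f (S i) ≤ f (insert (jsel i) (S i)) - f (S i))
    (O : Finset X) (hO : O.card ≤ k) :
    (1 - (1 - 1 / (c * k)) ^ k) * f O ≤ f (S k) ∧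
    (1 - Real.exp (-(1 / c))) * f O ≤ f (S k) := by
  have hk0 : (1 : ℝ) ≤ k := by exact_mod_cast hk
  have hck : 1 ≤ c * k := by nlinarith
  have hck0 : 0 < c * k := by linarith
  have hq0 : 0 ≤ 1 - 1 / (c * k) := by
    have : 1 / (c * k) ≤ 1 := by rw [div_le_one hck0]; exact hck
    linarith
  have hfO : 0 ≤ f O := by
    rw [← hempty]; exact hmono _ _ (Finset.empty_subset _)
  have key : ∀ i, i ≤ k → f O - f (S i) ≤ (1 - 1 / (c * k)) ^ i * f O := by
    intro i
    induction i with
    | zero => intro _; simp [hS0, hempty]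
    | succ i ih =>
      intro hi
      have hik : i < k := hi
      have ih' := ih hik.le
      have hg0 : 0 ≤ f (insert (jsel i) (S i)) - f (S i) :=
        sub_nonneg.2 (hmono _ _ (Finset.subset_insert _ _))
      have h1 := greedy_aux f c hc hcurv (S i) _ hg0 (hgreedy i hik) O
      rw [← hstep i hik] at h1 hg0
      have h2 : f O ≤ f (S i ∪ O) := hmono _ _ Finset.subset_union_right
      have hO' : (O.card : ℝ) ≤ k := by exact_mod_cast hO
      have h3 : (O.card : ℝ) * (c * (f (S (i+1)) - f (S i))) ≤
          k * (c * (f (S (i+1)) - f (S i))) :=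
        mul_le_mul_of_nonneg_right hO' (mul_nonneg (by linarith) hg0)
      have h4 : 1 / (c * k) * (f O - f (S i)) ≤ f (S (i+1)) - f (S i) := by
        rw [one_div_mul_eq_div, div_le_iff₀ hck0]
        linarith
      have h5 := mul_le_mul_of_nonneg_left ih' hq0
      rw [pow_succ]
      linarith
  have hmain := key k le_rfl
  have hexp : (1 - 1 / (c * k)) ^ k ≤ Real.exp (-(1 / c)) := by
    have h1 : 1 - 1 / (c * k) ≤ Real.exp (-(1 / (c * k))) := by
      have := Real.add_one_le_exp (-(1 / (c * k)))
      linarith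
    have h2 := pow_le_pow_left₀ hq0 h1 k
    rw [← Real.exp_nat_mul] at h2
    have h3 : (k : ℝ) * -(1 / (c * k)) = -(1 / c) := by
      have : (k : ℝ) ≠ 0 := by linarith
      have : c ≠ 0 := by linarith
      field_simp
    rwa [h3] at h2
  have h6 := mul_le_mul_of_nonneg_right hexp hfO
  constructor <;> linarith
end

section
/- Let k ≥ 1 with k ≤ |X|, let η_1, …, η_k ∈ (0, 1], and let S_0 = ∅, S_{i+1} = S_i ∪ {j_i} for i = 0, …, k−1, where each j_i ∈ X \ S_i satisfies f(S_i ∪ {j_i}) − f(S_i) ≥ η_{i+1} · max_{j ∈ X \ S_i} (f(S_i ∪ {j}) − f(S_i)) (an approximate greedy algorithm). Then for every subset O ⊆ X with |O| ≤ k, f(S_k) ≥ (1 − ∏_{i=1}^{k} (1 − η_i/(c·k))) · f(O). -/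
open Finset BigOperators

/-- Let `X` be a finite set and `f` a monotone nondecreasing set function with `f(∅) = 0`
whose maximum element-wise curvature is at most `c` (with `c ≥ 1`). Let `k ≥ 1` with
`k ≤ |X|`, let `η_1, …, η_k ∈ (0, 1]`, and let `S_0 = ∅`, `S_{i+1} = S_i ∪ {j_i}`, where
each `j_i ∈ X \ S_i` satisfies
`f(S_i ∪ {j_i}) − f(S_i) ≥ η_{i+1} · max_{j ∈ X \ S_i} (f(S_i ∪ {j}) − f(S_i))` (an
approximate greedy algorithm). Then for every subset `O ⊆ X` with `|O| ≤ k`,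
`f(S_k) ≥ (1 − ∏_{i=1}^{k} (1 − η_i/(c·k)))·f(O)`. -/
theorem approximate_greedy_guarantee {X : Type*} [Fintype X] [DecidableEq X]
    (f : Finset X → ℝ)
    (hmono : ∀ S T : Finset X, S ⊆ T → f S ≤ f T)
    (hempty : f ∅ = 0)
    (c : ℝ) (hc : 1 ≤ c)
    (hcurv : ∀ S T : Finset X, ∀ j : X, S ⊆ T → j ∉ T →
      f (insert j T) - f T ≤ c * (f (insert j S) - f S))
    (k : ℕ) (hk : 1 ≤ k) (hkX : k ≤ Fintype.card X)
    (η : ℕ → ℝ) (hη : ∀ i ∈ Finset.Icc 1 k, 0 < η i ∧ η i ≤ 1)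
    (S : ℕ → Finset X) (jsel : ℕ → X)
    (hS0 : S 0 = ∅)
    (hstep : ∀ i < k, S (i + 1) = insert (jsel i) (S i))
    (hnotmem : ∀ i < k, jsel i ∉ S i)
    (happrox : ∀ i < k, ∀ j, j ∉ S i →
      η (i + 1) * (f (insert j (S i)) - f (S i)) ≤ f (insert (jsel i) (S i)) - f (S i))
    (O : Finset X) (hO : O.card ≤ k) :
    (1 - ∏ i ∈ Finset.Icc 1 k, (1 - η i / (c * k))) * f O ≤ f (S k) := by
  have hkR : (1 : ℝ) ≤ k := by exact_mod_cast hk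
  have hckpos : 0 < c * k := by positivity
  have hck : 1 ≤ c * k := by nlinarith
  have key : ∀ i < k, ∀ O : Finset X,
      η (i + 1) * (f (S i ∪ O) - f (S i)) ≤
        c * O.card * (f (insert (jsel i) (S i)) - f (S i)) := by
    intro i hi O
    have he := hη (i + 1) (by simp; omega)
    have hg : 0 ≤ f (insert (jsel i) (S i)) - f (S i) :=
      sub_nonneg.2 (hmono _ _ (Finset.subset_insert _ _))
    induction O using Finset.induction_on with
    | empty => simp
    | insert j O hj ih =>
      rw [Finset.card_insert_of_notMem hj, Finset.union_insert]
      push_cast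
      by_cases hm : j ∈ S i ∪ O
      · rw [Finset.insert_eq_of_mem hm]
        have : 0 ≤ c * (f (insert (jsel i) (S i)) - f (S i)) := by positivity
        linarith
      · have h1 := hcurv (S i) (S i ∪ O) j Finset.subset_union_left hm
        have h2 := happrox i hi j (fun h => hm (Finset.mem_union_left _ h))
        have h3 := mul_le_mul_of_nonneg_left h1 he.1.le
        have h4 := mul_le_mul_of_nonneg_left h2 (by linarith : (0 : ℝ) ≤ c)
        linarith
  have main : ∀ n ≤ k, f O - f (S n) ≤
      (∏ i ∈ Finset.Icc 1 n, (1 - η i / (c * k))) * f O := by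
    intro n
    induction n with
    | zero => intro _; simp [hS0, hempty]
    | succ n ih =>
      intro hn
      have ih' := ih (by omega)
      have he := hη (n + 1) (by simp; omega)
      have hk1 := key n (by omega) O
      have hg : 0 ≤ f (insert (jsel n) (S n)) - f (S n) :=
        sub_nonneg.2 (hmono _ _ (Finset.subset_insert _ _))
      rw [Finset.prod_Icc_succ_top (by omega), hstep n (by omega)]
      have h1 : η (n + 1) * (f O - f (S n)) ≤
          c * k * (f (insert (jsel n) (S n)) - f (S n)) := by
        have hm := hmono O (S n ∪ O) Finset.subset_union_right
        have hO' : (O.card : ℝ) ≤ k := by exact_mod_cast hO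
        calc η (n + 1) * (f O - f (S n)) ≤ η (n + 1) * (f (S n ∪ O) - f (S n)) :=
              mul_le_mul_of_nonneg_left (by linarith) he.1.le
          _ ≤ _ := hk1
          _ ≤ _ := by gcongr
      have h2 : η (n + 1) / (c * k) * (f O - f (S n)) ≤
          f (insert (jsel n) (S n)) - f (S n) := by
        rw [div_mul_eq_mul_div, div_le_iff₀ hckpos]
        linarith
      have h3 : 0 ≤ 1 - η (n + 1) / (c * k) := by
        rw [sub_nonneg, div_le_one hckpos]
        linarith
      have h4 := mul_le_mul_of_nonneg_left ih' h3
      linarith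
  have := main k le_rfl
  linarith
end

section
/- Let n, k, s be natural numbers with 0 < n, k ≤ n, and s ≤ n. Then (C(n−k, s) : ℝ) ≤ (1 − k/n)^s · C(n, s), where C(·,·) denotes the binomial coefficient. Equivalently, the probability that a uniformly random s-element subset of an n-element set, drawn without replacement, contains no element of a fixed k-element subset is at most (1 − k/n)^s. -/
/-- Let `n, k, s` be natural numbers with `0 < n`, `k ≤ n`, and `s ≤ n`. Then
`C(n−k, s) ≤ (1 − k/n)^s · C(n, s)`. Equivalently, the probability that a uniformly random
`s`-element subset of an `n`-element set contains no element of a fixed `k`-element subset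
is at most `(1 − k/n)^s`. -/
theorem choose_sub_le_pow_mul_choose (n k s : ℕ) (hn : 0 < n) (hk : k ≤ n) (hs : s ≤ n) :
    ((n - k).choose s : ℝ) ≤ (1 - (k : ℝ) / n) ^ s * (n.choose s : ℝ) := by
  have hn' : (0 : ℝ) < n := by exact_mod_cast hn
  have hk' : (k : ℝ) ≤ n := by exact_mod_cast hk
  have hp0 : 0 ≤ 1 - (k : ℝ) / n := by
    rw [sub_nonneg, div_le_one hn']; exact hk'
  have hp1 : 1 - (k : ℝ) / n ≤ 1 := by
    have : 0 ≤ (k : ℝ) / n := by positivity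
    linarith
  have hpn : (1 - (k : ℝ) / n) * n = n - k := by field_simp
  generalize 1 - (k : ℝ) / n = p at *
  induction s with
  | zero => simp
  | succ s ih =>
    have ih := ih (by omega)
    by_cases h : n - k < s + 1
    · rw [Nat.choose_eq_zero_of_lt h]
      push_cast
      positivity
    · have e1 : ((n - k).choose (s + 1) : ℝ) * (s + 1) = (n - k).choose s * ((n : ℝ) - k - s) := by
        have := congrArg (Nat.cast (R := ℝ)) (Nat.choose_succ_right_eq (n - k) s)
        rw [Nat.cast_mul, Nat.cast_mul, Nat.cast_sub (by omega : s ≤ n - k), Nat.cast_sub hk] at this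
        exact_mod_cast this
      have e2 : (n.choose (s + 1) : ℝ) * (s + 1) = n.choose s * ((n : ℝ) - s) := by
        have := congrArg (Nat.cast (R := ℝ)) (Nat.choose_succ_right_eq n s)
        rw [Nat.cast_mul, Nat.cast_mul, Nat.cast_sub (by omega : s ≤ n)] at this
        exact_mod_cast this
      have hs0 : (0 : ℝ) ≤ s := Nat.cast_nonneg s
      have h1 : (n : ℝ) - k - s ≤ p * (n - s) := by
        nlinarith
      have h0 : (0 : ℝ) ≤ (n : ℝ) - k - s := by
        have : ((s + k : ℕ) : ℝ) ≤ n := by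
          exact_mod_cast (by omega : s + k ≤ n)
        push_cast at this
        linarith
      have h3 := mul_le_mul ih h1 h0 (by positivity)
      refine le_of_mul_le_mul_right ?_ (by positivity : (0 : ℝ) < s + 1)
      calc _ = _ := e1
        _ ≤ _ := h3
        _ = p ^ (s + 1) * (n.choose s * ((n : ℝ) - s)) := by ring
        _ = _ := by rw [← e2]; ring
end
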